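/- Let k be a field of characteristic p > 0, let (H_n)_{n ∈ ℕ} be a family of groups, and let G = *_{n ∈ ℕ} H_n be their free product. For each n, let Ind_n = kG ⊗_{kH_n} k denote the kG-module induced from the trivial kH_n-module k. Then: (1) for m ≠ n, the restriction of Ind_n to a kH_m-module (along the canonical inclusion H_m → G) is a free kH_m-module; and (2) the restriction of Ind_n to a kH_n-module is isomorphic to the direct sum of a copy of the trivial module k and a free kH_n-module (possibly zero). -/

import Mathlib

open TensorProduct DirectSum

noncomputable section

universe u

variable (k : Type u) [Field k] (H : ℕ → Type u) [∀ n, Group (H n)]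

/-- The group algebra `kG` of the free product `G = *_{n ∈ ℕ} H_n`. -/
abbrev FreeProdAlg : Type u := MonoidAlgebra k (Monoid.CoprodI H)

/-- The ring homomorphism `kH_n →+* kG` induced by the canonical inclusion `H_n → G`. -/
def inclHom (n : ℕ) : MonoidAlgebra k (H n) →+* FreeProdAlg k H :=
  MonoidAlgebra.mapDomainRingHom k (Monoid.CoprodI.of (i := n))

/-- The trivial `kH_n`-module `k`. -/
abbrev TrivMod (n : ℕ) : Type u := (Representation.trivial k (G := H n) (V := k)).asModule

/-- The `kG`-submodule of `kG ⊗_k k` of relations defining the balanced tensor product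
`kG ⊗_{kH_n} k`. -/
def indRel (n : ℕ) : Submodule (FreeProdAlg k H) (FreeProdAlg k H ⊗[k] TrivMod k H n) :=
  Submodule.span (FreeProdAlg k H)
    { x | ∃ (a : FreeProdAlg k H) (b : MonoidAlgebra k (H n)) (v : TrivMod k H n),
        x = (a * inclHom k H n b) ⊗ₜ[k] v - a ⊗ₜ[k] (b • v) }

/-- The induced module `Ind_n = kG ⊗_{kH_n} k`, the extension of scalars along
`kH_n → kG` of the trivial `kH_n`-module `k`, realised as the balanced tensor product. -/
abbrev Ind (n : ℕ) : Type u := (FreeProdAlg k H ⊗[k] TrivMod k H n) ⧸ indRel k H n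

/-- The induced module `Ind_n`, viewed as a `kH_m`-module by restriction of scalars along
the ring homomorphism `kH_m → kG`. -/
def ResInd (m n : ℕ) : Type u := Ind k H n

instance (m n : ℕ) : AddCommGroup (ResInd k H m n) :=
  inferInstanceAs (AddCommGroup (Ind k H n))

instance (m n : ℕ) : Module (MonoidAlgebra k (H m)) (ResInd k H m n) :=
  Module.compHom (Ind k H n) (inclHom k H m)

/-!
`Ind_n` is the permutation module `k[G / H_n]`, so its restriction to `H_m` is governed by the
stabilizers of the `H_m`-set `G / H_n`: a point with trivial stabilizer lies in an orbit spanning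
a copy of `kH_m`, and a fixed point spans a copy of `k`. The stabilizer of `gH_n` is
`H_m ∩ g H_n g⁻¹`. For `m ≠ n` it is trivial, since the projection `G → H_m` kills all conjugates
of `H_n`. For `m = n` it is trivial unless `g ∈ H_n`, because `H_n` is malnormal in `G`: if
`g ∉ H_n`, write `g = a w b` with `a, b ∈ H_n` and `w` a nonempty reduced word that neither starts
nor ends in `H_n`; then a relation `h w = w h'` with `1 ≠ h ∈ H_n` and `h' ∈ H_n` would equate two
reduced words with different first letters.
-/

section FreeProduct

open Monoid Monoid.CoprodI

variable {ι : Type*} {A : ι → Type*}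

theorem neWord_fst_eq_of_prod_eq [∀ i, Monoid (A i)] {i j i' j' : ι} {w : NeWord A i j}
    {w' : NeWord A i' j'} (h : w.prod = w'.prod) : i = i' := by
  classical
  have hword : w.toWord = w'.toWord := Word.equiv.symm.injective h
  simpa [Word.fstIdx, NeWord.toWord] using congrArg Word.fstIdx hword

theorem exists_neWord_prod_eq [∀ i, Monoid (A i)] {g : CoprodI A} (hg : g ≠ 1) :
    ∃ (i j : ι) (w : NeWord A i j), w.prod = g := by
  classical
  have hw : Word.equiv g ≠ .empty := fun h ↦
    hg (by rw [← Word.equiv.symm_apply_apply g, h]; exact Word.prod_empty)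
  obtain ⟨i, j, w, hw⟩ := NeWord.of_word _ hw
  exact ⟨i, j, w, by rw [NeWord.prod, hw]; exact Word.equiv.symm_apply_apply g⟩

theorem neWord_prod_eq_of_or_eq_mul_of [∀ i, Monoid (A i)] (n : ι) {i j : ι} (w : NeWord A i j) :
    (i = n ∧ ∃ a : A n, w.prod = of a) ∨
      ∃ j', j' ≠ n ∧ ∃ (w' : NeWord A i j') (a : A n), w.prod = w'.prod * of a := by
  induction w with
  | @singleton i x hx =>
    by_cases hi : i = n
    · subst hi
      exact .inl ⟨rfl, x, by simp⟩
    · exact .inr ⟨i, hi, .singleton x hx, 1, by simp⟩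
  | @append i j k l w₁ hne w₂ _ ih₂ =>
    rcases ih₂ with ⟨rfl, a, ha⟩ | ⟨j', hj', w', a, ha⟩
    · exact .inr ⟨j, hne, w₁, a, by simp [ha]⟩
    · exact .inr ⟨j', hj', .append w₁ hne w', a, by simp [ha, mul_assoc]⟩

variable [∀ i, Group (A i)]

theorem mem_range_of_or_exists_neWord (n : ι) (g : CoprodI A) :
    g ∈ (of : A n →* CoprodI A).range ∨
      ∃ i j, i ≠ n ∧ j ≠ n ∧ ∃ (w : NeWord A i j) (a b : A n), g = of a * w.prod * of b := by
  by_cases hg : g = 1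
  · exact .inl (hg ▸ one_mem _)
  obtain ⟨i, j, w, rfl⟩ := exists_neWord_prod_eq hg
  rcases neWord_prod_eq_of_or_eq_mul_of n w with ⟨-, a, ha⟩ | ⟨j', hj', w', b, hb⟩
  · exact .inl ⟨a, ha.symm⟩
  rcases neWord_prod_eq_of_or_eq_mul_of n w'.inv with ⟨hj, -⟩ | ⟨i', hi', u, a, ha⟩
  · exact absurd hj hj'
  · refine .inr ⟨i', j', hi', hj', u.inv, a⁻¹, b, ?_⟩
    rw [hb, ← inv_inv w'.prod, ← NeWord.inv_prod, ha]
    simp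

theorem of_mul_neWord_prod_ne {n i j : ι} (hi : i ≠ n) (hj : j ≠ n) (w : NeWord A i j)
    {a b : A n} (ha : a ≠ 1) : of a * w.prod ≠ w.prod * of b := by
  intro h
  have hb : b ≠ 1 := by
    rintro rfl
    exact ha (of_injective n (by simpa using h))
  -- Both sides are reduced words, the left one starting in `A n` and the right one in `A i`.
  have hprod : (NeWord.append (.singleton a ha) hi.symm w).prod =
      (NeWord.append w hj (.singleton b hb)).prod := by simpa using h
  exact hi (neWord_fst_eq_of_prod_eq hprod).symm

theorem mem_range_of_of_conj_mem_range {n : ι} {a : A n} (ha : a ≠ 1) {g : CoprodI A}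
    (h : g⁻¹ * of a * g ∈ (of : A n →* CoprodI A).range) :
    g ∈ (of : A n →* CoprodI A).range := by
  rcases mem_range_of_or_exists_neWord n g with hg | ⟨i, j, hi, hj, w, c, d, rfl⟩
  · exact hg
  obtain ⟨b, hb⟩ := h
  have hac : c⁻¹ * a * c ≠ 1 := by simpa [mul_assoc, inv_mul_eq_one, eq_comm] using ha
  refine absurd ?_ (of_mul_neWord_prod_ne hi hj w (b := d * b * d⁻¹) hac)
  simp [hb, mul_assoc]

theorem eq_one_of_conj_of_mem_range_of {m n : ι} (hmn : m ≠ n) {a : A m} {g : CoprodI A}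
    (h : g⁻¹ * of a * g ∈ (of : A n →* CoprodI A).range) : a = 1 := by
  classical
  obtain ⟨b, hb⟩ := h
  let π : CoprodI A →* A m := lift (Pi.mulSingle m (MonoidHom.id (A m)))
  have hπb : π (of b) = 1 := by simp [π, Pi.mulSingle_eq_of_ne hmn.symm]
  have hπa : π (of a) = a := of_leftInverse m a
  simpa [hb, hπa, mul_assoc, inv_mul_eq_one] using hπb

end FreeProduct

section PermutationModules

open Module MonoidAlgebra

universe v

variable {R G Y M N : Type*} {X : Type v} [CommSemiring R]

/-- An `R`-basis `b` of an `R[G]`-module, indexed by a `G`-set, is a permutation basis if the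
elements of `G` act by permuting the basis vectors as they permute the indices. A module is a
permutation module `R[X]` exactly when it has a permutation basis indexed by `X`. -/
def IsPermutationBasis (G : Type*) [Monoid G] [SMul G X] [AddCommMonoid M] [Module R M]
    [Module R[G] M] (b : Basis X R M) : Prop :=
  ∀ (g : G) (x : X), single g (1 : R) • b x = b (g • x)

namespace IsPermutationBasis

variable [Monoid G] [SMul G X] [SMul G Y] [AddCommMonoid M] [Module R M] [Module R[G] M]
  [AddCommMonoid N] [Module R N] [Module R[G] N]

theorem reindex {b : Basis X R M} (hb : IsPermutationBasis G b) (e : X ≃ Y)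
    (he : ∀ (g : G) (x : X), e (g • x) = g • e x) : IsPermutationBasis G (b.reindex e) := by
  intro g y
  obtain ⟨x, rfl⟩ := e.surjective y
  simp [hb g x, ← he]

theorem prod {b : Basis X R M} {c : Basis Y R N} (hb : IsPermutationBasis G b)
    (hc : IsPermutationBasis G c) : IsPermutationBasis G (b.prod c) := by
  rintro g (x | y)
  · simp [Basis.prod_apply, hb g x]
  · simp [Basis.prod_apply, hc g y]

/-- Permutation modules on the same `G`-set are isomorphic. -/
def linearEquiv [IsScalarTower R R[G] M] [IsScalarTower R R[G] N] {b : Basis X R M}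
    {c : Basis X R N} (hb : IsPermutationBasis G b) (hc : IsPermutationBasis G c) :
    M ≃ₗ[R[G]] N :=
  let f : M ≃ₗ[R] N := b.equiv c (Equiv.refl X)
  have hf (g : G) : f.toLinearMap ∘ₗ Algebra.lsmul R R M (single g (1 : R)) =
      Algebra.lsmul R R N (single g (1 : R)) ∘ₗ f.toLinearMap :=
    b.ext fun x ↦ by simp [f, hb g x, hc g x]
  .ofBijective (equivariantOfLinearOfComm f.toLinearMap fun g ↦ LinearMap.congr_fun (hf g))
    f.bijective

end IsPermutationBasis

variable (R G) in
theorem isPermutationBasis_finsupp (O : Type*) [Monoid G] :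
    IsPermutationBasis G (Finsupp.basis fun _ : O ↦ MonoidAlgebra.basis G R) := by
  rintro g ⟨o, h⟩
  simp [Finsupp.coe_basis]

variable (R G) in
theorem isPermutationBasis_trivial [Monoid G] :
    IsPermutationBasis G ((Basis.singleton Unit R).map
      (Representation.trivial R (G := G) (V := R)).asModuleEquiv.symm) := by
  intro g _
  simp only [Basis.map_apply, Basis.singleton_apply, Representation.single_smul,
    Representation.isTrivial_def, LinearEquiv.apply_symm_apply, LinearMap.id_coe, id_eq,
    smul_eq_mul, mul_one, PUnit.smul_eq]
  rfl

variable (R G X) in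
/-- The standard basis of the permutation module `R[X]`. -/
def permutationModuleBasis [Monoid G] [MulAction G X] :
    Basis X R (Representation.ofMulAction R G X).asModule :=
  (MonoidAlgebra.basis X R).map (Representation.ofMulAction R G X).asModuleEquiv.symm

variable (R G X) in
theorem isPermutationBasis_permutationModuleBasis [Monoid G] [MulAction G X] :
    IsPermutationBasis G (permutationModuleBasis R G X) := by
  intro g x
  simp only [permutationModuleBasis, Basis.map_apply, basis_apply, Representation.single_smul,
    LinearEquiv.apply_symm_apply, Representation.ofMulAction_single, one_smul]
  rfl

variable [Group G] [MulAction G X]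

variable (R) in
theorem exists_isPermutationBasis_orbits_finsupp (hX : ∀ x : X, MulAction.stabilizer G x = ⊥) :
    ∃ b : Basis X R (MulAction.orbitRel.Quotient G X →₀ R[G]), IsPermutationBasis G b := by
  let e : (Σ _ : MulAction.orbitRel.Quotient G X, G) ≃ X :=
    (Equiv.sigmaEquivProd _ _).trans (MulAction.selfEquivOrbitsQuotientProd hX).symm
  refine ⟨_, (isPermutationBasis_finsupp R G _).reindex e ?_⟩
  rintro g ⟨o, h⟩
  exact mul_smul g h o.out

variable [AddCommMonoid M] [Module R M] [Module R[G] M] [IsScalarTower R R[G] M]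

theorem IsPermutationBasis.free {b : Basis X R M} (hb : IsPermutationBasis G b)
    (hX : ∀ x : X, MulAction.stabilizer G x = ⊥) : Module.Free R[G] M := by
  obtain ⟨c, hc⟩ := exists_isPermutationBasis_orbits_finsupp R hX
  exact .of_equiv (hc.linearEquiv hb)

/-- The complement of a fixed point of a `G`-set, as an invariant subset. -/
def fixedPointCompl {x₀ : X} (hx₀ : x₀ ∈ MulAction.fixedPoints G X) : SubMulAction G X where
  carrier := {x₀}ᶜ
  smul_mem' g _ hx h := hx (smul_left_cancel g (h.trans (hx₀ g).symm))

theorem exists_equiv_unit_sum_fixedPointCompl {x₀ : X} (hx₀ : x₀ ∈ MulAction.fixedPoints G X) :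
    ∃ e : Unit ⊕ fixedPointCompl hx₀ ≃ X, ∀ (g : G) x, e (g • x) = g • e x := by
  classical
  refine ⟨((Equiv.Set.singleton x₀).symm.sumCongr (.refl _)).trans
    (Equiv.Set.sumCompl ({x₀} : Set X)), ?_⟩
  rintro g (_ | _)
  · exact (hx₀ g).symm
  · rfl

theorem IsPermutationBasis.exists_linearEquiv_trivial_prod {b : Basis X R M}
    (hb : IsPermutationBasis G b) {x₀ : X} (hx₀ : x₀ ∈ MulAction.fixedPoints G X)
    (hX : ∀ x ≠ x₀, MulAction.stabilizer G x = ⊥) :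
    ∃ O : Type v, Nonempty (M ≃ₗ[R[G]]
      (Representation.trivial R (G := G) (V := R)).asModule × (O →₀ R[G])) := by
  have hY (y : fixedPointCompl hx₀) : MulAction.stabilizer G y = ⊥ := by
    rw [SubMulAction.stabilizer_of_subMul, hX y y.2]
  obtain ⟨c, hc⟩ := exists_isPermutationBasis_orbits_finsupp R hY
  obtain ⟨e, he⟩ := exists_equiv_unit_sum_fixedPointCompl hx₀
  exact ⟨_, ⟨hb.linearEquiv (((isPermutationBasis_trivial R G).prod hc).reindex e he)⟩⟩

end PermutationModules

section Induced

open Module MonoidAlgebra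

/-- The coset space `G / H_n`, on which `G` acts by left translation. -/
abbrev FactorCosets (n : ℕ) : Type u :=
  Monoid.CoprodI H ⧸ (Monoid.CoprodI.of : H n →* Monoid.CoprodI H).range

/-- The generator of the trivial module `k`. -/
def trivOne (n : ℕ) : TrivMod k H n :=
  (Representation.trivial k (G := H n) (V := k)).asModuleEquiv.symm 1

theorem single_smul_trivOne {n : ℕ} (h : H n) :
    single h (1 : k) • trivOne k H n = trivOne k H n := by
  rw [Representation.single_smul, one_smul]
  rfl

/-- The vector `g ⊗ 1` of `Ind_n`, which depends only on the coset of `g`. -/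
def indVec (n : ℕ) : FactorCosets H n → Ind k H n :=
  Quotient.lift (fun g ↦ Submodule.Quotient.mk (single g (1 : k) ⊗ₜ[k] trivOne k H n)) <| by
    intro g g' hg
    obtain ⟨h, hh⟩ := QuotientGroup.leftRel_apply.mp hg
    obtain rfl : g' = g * Monoid.CoprodI.of h := by simp [hh]
    refine ((Submodule.Quotient.eq _).mpr (Submodule.subset_span ?_)).symm
    exact ⟨single g 1, single h 1, trivOne k H n, by rw [single_smul_trivOne]; simp [inclHom]⟩

theorem indVec_mk (n : ℕ) (g : Monoid.CoprodI H) :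
    indVec k H n (QuotientGroup.mk g) =
      Submodule.Quotient.mk (single g (1 : k) ⊗ₜ[k] trivOne k H n) :=
  rfl

theorem single_smul_indVec {n : ℕ} (g : Monoid.CoprodI H) (x : FactorCosets H n) :
    single g (1 : k) • indVec k H n x = indVec k H n (g • x) := by
  induction x using QuotientGroup.induction_on with
  | H g' =>
    rw [MulAction.Quotient.smul_coe, indVec_mk, indVec_mk, ← Submodule.Quotient.mk_smul,
      TensorProduct.smul_tmul']
    simp

theorem mk_single_tmul {n : ℕ} (g : Monoid.CoprodI H) (c : k) (v : TrivMod k H n) :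
    (Submodule.Quotient.mk (single g c ⊗ₜ[k] v) : Ind k H n) =
      (c * Representation.asModuleEquiv _ v) • indVec k H n (QuotientGroup.mk g) := by
  have hv : v = Representation.asModuleEquiv _ v • trivOne k H n := by
    apply (Representation.trivial k (G := H n) (V := k)).asModuleEquiv.injective
    simp [trivOne]
  have hg : single g c = c • (single g 1 : FreeProdAlg k H) := by simp
  rw [indVec_mk, ← Submodule.Quotient.mk_smul, hg, mul_smul, ← TensorProduct.tmul_smul, ← hv,
    TensorProduct.smul_tmul']

theorem span_range_indVec (n : ℕ) : Submodule.span k (Set.range (indVec k H n)) = ⊤ := by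
  refine eq_top_iff.mpr fun x _ ↦ ?_
  obtain ⟨x, rfl⟩ := Submodule.Quotient.mk_surjective _ x
  induction x using TensorProduct.induction_on with
  | zero => exact zero_mem _
  | add x y hx hy => exact add_mem (hx trivial) (hy trivial)
  | tmul a v =>
    induction a using MonoidAlgebra.induction_linear with
    | zero => rw [TensorProduct.zero_tmul]; exact zero_mem _
    | add a b ha hb => rw [TensorProduct.add_tmul]; exact add_mem (ha trivial) (hb trivial)
    | single g c =>
      rw [mk_single_tmul]
      exact Submodule.smul_mem _ _ (Submodule.subset_span ⟨_, rfl⟩)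

/-- The permutation module `k[G / H_n]`. -/
abbrev CosetMod (n : ℕ) : Type u :=
  (Representation.ofMulAction k (Monoid.CoprodI H) (FactorCosets H n)).asModule

/-- The basis of `k[G / H_n]` formed by the cosets. -/
abbrev cosetBasis (n : ℕ) : Basis (FactorCosets H n) k (CosetMod k H n) :=
  permutationModuleBasis k (Monoid.CoprodI H) (FactorCosets H n)

theorem single_smul_cosetBasis_one {n : ℕ} (g : Monoid.CoprodI H) (c : k) :
    (single g c : FreeProdAlg k H) • cosetBasis k H n (QuotientGroup.mk 1) =
      c • cosetBasis k H n (QuotientGroup.mk g) := by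
  have hg : single g c = c • (single g 1 : FreeProdAlg k H) := by simp
  rw [hg, smul_assoc, isPermutationBasis_permutationModuleBasis, MulAction.Quotient.smul_coe,
    smul_eq_mul, mul_one]

theorem inclHom_smul_cosetBasis_one {n : ℕ} (b : MonoidAlgebra k (H n)) (v : TrivMod k H n) :
    Representation.asModuleEquiv _ v • inclHom k H n b • cosetBasis k H n (QuotientGroup.mk 1) =
      Representation.asModuleEquiv _ (b • v) • cosetBasis k H n (QuotientGroup.mk 1) := by
  induction b using MonoidAlgebra.induction_linear with
  | zero => simp
  | add b b' hb hb' => simp only [map_add, add_smul, smul_add, hb, hb']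
  | single h c =>
    have hcoset : (QuotientGroup.mk (Monoid.CoprodI.of h) : FactorCosets H n) =
        QuotientGroup.mk 1 := QuotientGroup.eq.mpr ⟨h⁻¹, by simp⟩
    have hincl : inclHom k H n (single h c) = single (Monoid.CoprodI.of h) c := by simp [inclHom]
    rw [hincl, single_smul_cosetBasis_one, hcoset, smul_comm, smul_smul,
      Representation.single_smul]
    rfl

/-- The `kG`-linear map `kG ⊗ k → k[G / H_n]` sending `a ⊗ v` to `v • a • H_n`. -/
def tensorToCosetMod (n : ℕ) :
    FreeProdAlg k H ⊗[k] TrivMod k H n →ₗ[FreeProdAlg k H] CosetMod k H n :=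
  LinearMap.toSpanSingleton (FreeProdAlg k H) _ (cosetBasis k H n (QuotientGroup.mk 1)) ∘ₗ
    (TensorProduct.AlgebraTensorModule.rid k (FreeProdAlg k H) (FreeProdAlg k H)).toLinearMap ∘ₗ
      TensorProduct.AlgebraTensorModule.map LinearMap.id
        (Representation.trivial k (G := H n) (V := k)).asModuleEquiv.toLinearMap

theorem tensorToCosetMod_tmul {n : ℕ} (a : FreeProdAlg k H) (v : TrivMod k H n) :
    tensorToCosetMod k H n (a ⊗ₜ v) =
      a • Representation.asModuleEquiv _ v • cosetBasis k H n (QuotientGroup.mk 1) := by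
  have hav : tensorToCosetMod k H n (a ⊗ₜ v) =
      (Representation.asModuleEquiv _ v • a) • cosetBasis k H n (QuotientGroup.mk 1) := by
    simp only [tensorToCosetMod, LinearMap.comp_apply, TensorProduct.AlgebraTensorModule.map_tmul,
      LinearEquiv.coe_coe, LinearMap.id_apply, TensorProduct.AlgebraTensorModule.rid_tmul,
      LinearMap.toSpanSingleton_apply]
  rw [hav, smul_assoc, smul_comm]

theorem indRel_le_ker_tensorToCosetMod (n : ℕ) :
    indRel k H n ≤ LinearMap.ker (tensorToCosetMod k H n) := by
  rw [indRel, Submodule.span_le]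
  rintro _ ⟨a, b, v, rfl⟩
  rw [SetLike.mem_coe, LinearMap.mem_ker, map_sub, sub_eq_zero, tensorToCosetMod_tmul,
    tensorToCosetMod_tmul, ← inclHom_smul_cosetBasis_one, mul_smul, smul_comm (inclHom k H n b)]

theorem linearIndependent_indVec (n : ℕ) : LinearIndependent k (indVec k H n) := by
  let f : Ind k H n →ₗ[k] CosetMod k H n :=
    ((indRel k H n).liftQ _ (indRel_le_ker_tensorToCosetMod k H n)).restrictScalars k
  have hf : f ∘ indVec k H n = cosetBasis k H n := by
    ext x
    induction x using QuotientGroup.induction_on with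
    | H g =>
      change tensorToCosetMod k H n (single g 1 ⊗ₜ trivOne k H n) = _
      rw [tensorToCosetMod_tmul, trivOne, LinearEquiv.apply_symm_apply, one_smul,
        single_smul_cosetBasis_one, one_smul]
  exact .of_comp f (hf ▸ (cosetBasis k H n).linearIndependent)

/-- The basis of `Ind_n`, hence of its restrictions, consisting of the vectors `g ⊗ 1`. -/
def indBasis (n : ℕ) : Basis (FactorCosets H n) k (Ind k H n) :=
  .mk (linearIndependent_indVec k H n) (span_range_indVec k H n).ge

theorem isPermutationBasis_indBasis (n : ℕ) :
    IsPermutationBasis (Monoid.CoprodI H) (indBasis k H n) := by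
  intro g x
  simp [indBasis, single_smul_indVec]

end Induced

section Restricted

open Module MonoidAlgebra

/-- The coset space `G / H_n`, viewed as an `H_m`-set by restriction along `H_m → G`. -/
def ResCosets (_m n : ℕ) : Type u := FactorCosets H n

instance (m n : ℕ) : MulAction (H m) (ResCosets H m n) :=
  .compHom (FactorCosets H n) (Monoid.CoprodI.of (i := m))

instance (m n : ℕ) : Module k (ResInd k H m n) :=
  inferInstanceAs (Module k (Ind k H n))

instance (m n : ℕ) : IsScalarTower k (MonoidAlgebra k (H m)) (ResInd k H m n) where
  smul_assoc c a (x : Ind k H n) := by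
    have hca : inclHom k H m (c • a) = c • inclHom k H m a := by simp [inclHom]
    change inclHom k H m (c • a) • x = c • inclHom k H m a • x
    rw [hca, smul_assoc]

/-- The basis `indBasis`, viewed as a basis of a restriction of `Ind_n`. -/
def resIndBasis (m n : ℕ) : Basis (ResCosets H m n) k (ResInd k H m n) :=
  indBasis k H n

theorem isPermutationBasis_resIndBasis (m n : ℕ) :
    IsPermutationBasis (H m) (resIndBasis k H m n) := by
  intro h x
  have hincl : inclHom k H m (single h 1) = single (Monoid.CoprodI.of h) 1 := by simp [inclHom]
  exact (congrArg (· • indBasis k H n x) hincl).trans (isPermutationBasis_indBasis k H n _ x)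

theorem mem_stabilizer_resCosets_iff {m n : ℕ} {h : H m} {g : Monoid.CoprodI H} :
    h ∈ MulAction.stabilizer (H m) (show ResCosets H m n from QuotientGroup.mk g) ↔
      g⁻¹ * Monoid.CoprodI.of h * g ∈ (Monoid.CoprodI.of : H n →* Monoid.CoprodI H).range := by
  change (QuotientGroup.mk (Monoid.CoprodI.of h * g) : FactorCosets H n) = QuotientGroup.mk g ↔ _
  rw [eq_comm, QuotientGroup.eq, mul_assoc]

theorem stabilizer_resCosets_eq_bot_of_ne {m n : ℕ} (hmn : m ≠ n) (x : ResCosets H m n) :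
    MulAction.stabilizer (H m) x = ⊥ := by
  obtain ⟨g, rfl⟩ := QuotientGroup.mk_surjective x
  exact (Subgroup.eq_bot_iff_forall _).mpr fun h hh ↦
    eq_one_of_conj_of_mem_range_of hmn (mem_stabilizer_resCosets_iff H |>.mp hh)

/-- The coset `H_n`, as a point of `G / H_n`. -/
def baseCoset (n : ℕ) : ResCosets H n n :=
  (QuotientGroup.mk 1 : FactorCosets H n)

theorem baseCoset_mem_fixedPoints (n : ℕ) :
    baseCoset H n ∈ MulAction.fixedPoints (H n) (ResCosets H n n) := fun h ↦
  (mem_stabilizer_resCosets_iff H).mpr ⟨h, by simp⟩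

theorem stabilizer_eq_bot_of_ne_baseCoset {n : ℕ} {x : ResCosets H n n}
    (hx : x ≠ baseCoset H n) : MulAction.stabilizer (H n) x = ⊥ := by
  obtain ⟨g, rfl⟩ := QuotientGroup.mk_surjective x
  refine (Subgroup.eq_bot_iff_forall _).mpr fun h hh ↦ by_contra fun hne ↦ hx ?_
  have hg := mem_range_of_of_conj_mem_range hne ((mem_stabilizer_resCosets_iff H).mp hh)
  exact (QuotientGroup.eq.mpr (by simpa using hg)).symm

end Restricted

theorem resInd_free_of_ne_and_trivial_sum_free_general :
    (∀ m n : ℕ, m ≠ n → Module.Free (MonoidAlgebra k (H m)) (ResInd k H m n)) ∧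
    (∀ n : ℕ, ∃ (F : Type u) (_ : AddCommGroup F) (_ : Module (MonoidAlgebra k (H n)) F),
      Module.Free (MonoidAlgebra k (H n)) F ∧
      Nonempty (ResInd k H n n ≃ₗ[MonoidAlgebra k (H n)] (TrivMod k H n × F))) := by
  refine ⟨fun m n hmn ↦ (isPermutationBasis_resIndBasis k H m n).free
    (stabilizer_resCosets_eq_bot_of_ne H hmn), fun n ↦ ?_⟩
  obtain ⟨O, e⟩ := (isPermutationBasis_resIndBasis k H n n).exists_linearEquiv_trivial_prod
    (baseCoset_mem_fixedPoints H n) fun _ ↦ stabilizer_eq_bot_of_ne_baseCoset H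
  exact ⟨O →₀ MonoidAlgebra k (H n), inferInstance, inferInstance, inferInstance, e⟩

/-- Let `k` be a field of characteristic `p > 0`, `(H_n)` a family of groups and
`G = *_{n ∈ ℕ} H_n` their free product, and `Ind_n = kG ⊗_{kH_n} k`.  Then:
(1) for `m ≠ n` the restriction of `Ind_n` to `kH_m` is a free `kH_m`-module; and
(2) the restriction of `Ind_n` to `kH_n` is the direct sum of a copy of the trivial
module `k` and a free `kH_n`-module (possibly zero). -/
theorem resInd_free_of_ne_and_trivial_sum_free
    (p : ℕ) (hp : 0 < p) [CharP k p] :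
    (∀ m n : ℕ, m ≠ n → Module.Free (MonoidAlgebra k (H m)) (ResInd k H m n)) ∧
    (∀ n : ℕ, ∃ (F : Type u) (_ : AddCommGroup F) (_ : Module (MonoidAlgebra k (H n)) F),
      Module.Free (MonoidAlgebra k (H n)) F ∧
      Nonempty (ResInd k H n n ≃ₗ[MonoidAlgebra k (H n)] (TrivMod k H n × F))) :=
  resInd_free_of_ne_and_trivial_sum_free_general k H
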